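/- In the hypersurface setting of the context, there exist a field extension K of k and an arc φ : S[x] → K[[t]] in X = V(f) through the closed point ξ (with φ(x) and all φ(z_j) nonzero) such that r_{X,φ}/ord(φ) = ord(G_X^{(d)}). -/

import Mathlib

open Polynomial
open scoped ENNReal

noncomputable section

namespace NashMult

/-- The `m`-adic order `ν(f)` of an element `f` of a ring: the largest `n` with `f ∈ m ^ n`. -/
def adicOrder {R : Type*} [CommRing R] (m : Ideal R) (f : R) : ℕ :=
  sSup {n : ℕ | f ∈ m ^ n}

/-- A subalgebra `G ⊆ R[W]` is *graded* if it is spanned by its "monomials", i.e. it is closed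
under taking homogeneous components.  This is the condition expressing that `G = ⊕ I_l W^l`
for a family of ideals `I_l` (with `I_0 = R` and `I_i · I_j ⊆ I_{i+j}` automatic). -/
def Graded {R : Type*} [CommRing R] (G : Subalgebra R (Polynomial R)) : Prop :=
  ∀ p ∈ G, ∀ n : ℕ, (C (p.coeff n) * X ^ n : Polynomial R) ∈ G

/-- A *Rees algebra* over `R`: a finitely generated graded subalgebra of `R[W]`. -/
def IsReesAlgebra {R : Type*} [CommRing R] (G : Subalgebra R (Polynomial R)) : Prop :=
  G.FG ∧ Graded G

/-- The order of (the Rees algebra) `G` at the closed point of the local ring `(R, m)`: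
`ord(G) = inf { ν(f)/n : f W^n a homogeneous element of G, n ≥ 1, f ≠ 0 }`
(with value `∞` for the empty infimum). -/
def reesOrder {R : Type*} [CommRing R] (m : Ideal R) (G : Subalgebra R (Polynomial R)) : ℝ≥0∞ :=
  sInf {q : ℝ≥0∞ | ∃ (f : R) (n : ℕ), f ≠ 0 ∧ 1 ≤ n ∧ (C f * X ^ n : Polynomial R) ∈ G ∧
    q = (adicOrder m f : ℝ≥0∞) / (n : ℝ≥0∞)}

/-- `G = ⊕ I_l W^l` is *differentially closed* relative to a family `D` of derivations if
`I_{l+1} ⊆ I_l` and `D_j (I_l) ⊆ I_{l-1}` for all `l ≥ 1` and all `j`. -/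
def DiffClosed {k R ι : Type*} [CommRing k] [CommRing R] [Algebra k R]
    (D : ι → Derivation k R R) (G : Subalgebra R (Polynomial R)) : Prop :=
  (∀ (f : R) (l : ℕ), 1 ≤ l → (C f * X ^ (l + 1) : Polynomial R) ∈ G →
      (C f * X ^ l : Polynomial R) ∈ G) ∧
  (∀ (f : R) (l : ℕ) (j : ι), (C f * X ^ (l + 1) : Polynomial R) ∈ G →
      (C (D j f) * X ^ l : Polynomial R) ∈ G)

/-- `Diff(M)`: the smallest graded differentially closed subalgebra of `R[W]` containing the
set `M`. -/
def diffClosure {k R ι : Type*} [CommRing k] [CommRing R] [Algebra k R]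
    (D : ι → Derivation k R R) (M : Set (Polynomial R)) : Subalgebra R (Polynomial R) :=
  sInf {G : Subalgebra R (Polynomial R) | M ⊆ ↑G ∧ Graded G ∧ DiffClosed D G}

/-- The image `ψ(G)` of a Rees algebra `G` over `R` under a homomorphism (arc) `ψ : R → K⟦t⟧`:
the Rees algebra over `K⟦t⟧` generated by all `ψ(g) W^l` for `g W^l` a homogeneous element of
`G` with `ψ(g) ≠ 0`. -/
def arcImage {R A : Type*} [CommRing R] [CommRing A] (ψ : R → A)
    (G : Subalgebra R (Polynomial R)) : Subalgebra A (Polynomial A) :=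
  Algebra.adjoin A {p : Polynomial A | ∃ (g : R) (l : ℕ),
    (C g * X ^ l : Polynomial R) ∈ G ∧ ψ g ≠ 0 ∧ p = C (ψ g) * X ^ l}

/-- The order `ord(ψ)` of an arc `ψ : R → K⟦t⟧`: the largest `n` such that
`ψ(m) ⊆ t^n` (`t` being the ideal `tI`). -/
def homOrd {R A : Type*} [CommRing R] [CommRing A] (m : Ideal R) (tI : Ideal A)
    (ψ : R → A) : ℕ :=
  sSup {n : ℕ | ∀ s ∈ m, ψ s ∈ tI ^ n}

/-- The maximal ideal `(t)` of `K⟦t⟧`. -/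
def tId (K : Type*) [CommRing K] : Ideal (PowerSeries K) :=
  Ideal.span {(PowerSeries.X : PowerSeries K)}

/-- The `t`-adic order on `K⟦t⟧`. -/
def tOrd {K : Type*} [CommRing K] (g : PowerSeries K) : ℕ :=
  adicOrder (tId K) g

/-- The family of ideals `I_l` of the graded algebra `G = ⊕ I_l W^l`. -/
def idealFam {R : Type*} [CommRing R] (G : Subalgebra R (Polynomial R)) (l : ℕ) : Ideal R :=
  Submodule.comap (Polynomial.monomial l : R →ₗ[R] Polynomial R) (Subalgebra.toSubmodule G)

/-- The closed point of the local ring `(R, m)` belongs to the singular locus of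
`G = ⊕ I_l W^l`, i.e. `ν(I_l) ≥ l` for all `l ≥ 1`. -/
def SingFam {R : Type*} [CommRing R] (m : Ideal R) (I : ℕ → Ideal R) : Prop :=
  ∀ l : ℕ, 1 ≤ l → I l ≤ m ^ l

/-- The transform `⊕ (I_l · T^{-l}) W^l` of a Rees algebra `⊕ I_l W^l` over a DVR with
uniformizer `T` (when the closed point lies in the singular locus, `I_l ⊆ (T^l)` and
`I_l · T^{-l} = (I_l : (T^l))`). -/
def transformFam {R : Type*} [CommRing R] (T : R) (I : ℕ → Ideal R) : ℕ → Ideal R :=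
  fun l => (I l).colon (Ideal.span {T ^ l})

/-- The persistance: the least number `κ` of transforms needed so that the closed point no
longer lies in the singular locus. -/
def persist {R : Type*} [CommRing R] (m : Ideal R) (T : R)
    (G : Subalgebra R (Polynomial R)) : ℕ :=
  sInf {κ : ℕ | ¬ SingFam m ((transformFam T)^[κ] (idealFam G))}

/-- The set of elements of a ring integral over a subset `s` (monic equation with
coefficients in `s`). -/
def intClos {A : Type*} [CommRing A] (s : Set A) : Set A :=
  {p : A | ∃ q : Polynomial A, q.Monic ∧ (∀ n, q.coeff n ∈ s) ∧ Polynomial.eval p q = 0}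


/-- The monic polynomial `f = x^b + B_{b-2} x^{b-2} + ⋯ + B_1 x + B_0` with coefficients
`B_j = Bc j` (only `j ≤ b - 2` is relevant). -/
def minPolyOf {S : Type*} [CommRing S] (b : ℕ) (Bc : ℕ → S) : Polynomial S :=
  Polynomial.X ^ b + ∑ j ∈ Finset.range (b - 1), Polynomial.C (Bc j) * Polynomial.X ^ j


/-- The maximal ideal `(z_1, …, z_d)` of the polynomial ring `k[z_1, …, z_d]`
(the kernel of evaluation at the origin). -/
def mPoly (k : Type) [Field k] (d : ℕ) : Ideal (MvPolynomial (Fin d) k) :=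
  RingHom.ker (MvPolynomial.aeval (fun _ => (0 : k)) : MvPolynomial (Fin d) k →ₐ[k] k)

instance {k : Type} [Field k] {d : ℕ} : (mPoly k d).IsMaximal :=
  RingHom.ker_isMaximal_of_surjective _ (fun a => ⟨MvPolynomial.C a, by simp⟩)

instance {k : Type} [Field k] {d : ℕ} : (mPoly k d).IsPrime :=
  (inferInstance : (mPoly k d).IsMaximal).isPrime

/-- `IsSLoc k d S` says that `S` is (identified with) the localization of `k[z_1, …, z_d]`
at the maximal ideal `(z_1, …, z_d)`. -/
abbrev IsSLoc (k : Type) [Field k] (d : ℕ) (S : Type) [CommRing S]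
    [Algebra (MvPolynomial (Fin d) k) S] : Prop :=
  IsLocalization.AtPrime S (mPoly k d)

/-- The element `z_j` of `S`. -/
def zvar (k : Type) [Field k] (d : ℕ) (S : Type) [CommRing S]
    [Algebra (MvPolynomial (Fin d) k) S] (j : Fin d) : S :=
  algebraMap (MvPolynomial (Fin d) k) S (MvPolynomial.X j)

/-- The maximal ideal `m = (z_1, …, z_d)` of the local ring `S`. -/
def mS (k : Type) [Field k] (d : ℕ) (S : Type) [CommRing S]
    [Algebra (MvPolynomial (Fin d) k) S] : Ideal S :=
  (mPoly k d).map (algebraMap (MvPolynomial (Fin d) k) S)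


variable (k : Type) [Field k] (d : ℕ)
variable (S : Type) [CommRing S] [Algebra (MvPolynomial (Fin d) k) S] [Algebra k S]

/-- The elimination algebra `G_X^{(d)} = Diff(S[B_{b-2} W^2, …, B_0 W^b])` over `S` of the
hypersurface `X = V(f)`, where `f = x^b + B_{b-2} x^{b-2} + ⋯ + B_0`. -/
def hypElim (D : Fin d → Derivation k S S) (b : ℕ) (Bc : ℕ → S) :
    Subalgebra S (Polynomial S) :=
  diffClosure D {p : Polynomial S | ∃ i ≤ b - 2,
    p = Polynomial.C (Bc i) * Polynomial.X ^ (b - i)}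

/-- An arc in the hypersurface `X = V(f)` through the closed point `ξ`: a `k`-algebra
homomorphism `φ : S[x] → K⟦t⟧` with `φ(f) = 0` and `φ(x), φ(z_1), …, φ(z_d) ∈ (t)`,
with `φ(x)` and all `φ(z_j)` nonzero. -/
def IsHypArc (b : ℕ) (Bc : ℕ → S) {K : Type} [Field K] [Algebra k K]
    (φ : Polynomial S →ₐ[k] PowerSeries K) : Prop :=
  φ (minPolyOf b Bc) = 0 ∧
  φ Polynomial.X ∈ tId K ∧ (∀ j, φ (Polynomial.C (zvar k d S j)) ∈ tId K) ∧
  φ Polynomial.X ≠ 0 ∧ (∀ j, φ (Polynomial.C (zvar k d S j)) ≠ 0)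

/-- The order of the arc `φ`: `ord(φ) = min {α_0, α_1, …, α_d}`, where
`α_0 = ord_t φ(x)` and `α_j = ord_t φ(z_j)`. -/
def hypArcOrd {K : Type} [Field K] [Algebra k K]
    (φ : Polynomial S →ₐ[k] PowerSeries K) : ℕ :=
  sInf (insert (tOrd (φ Polynomial.X))
    (Set.range fun j => tOrd (φ (Polynomial.C (zvar k d S j)))))

/-- The contact algebra `G^{(1)}_{X_0,φ}`: the Rees algebra over `K⟦t⟧` generated by
`t^{α_0} W` together with all `φ(g) W^l`, for `g W^l` a homogeneous element of `G_X^{(d)}`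
with `φ(g) ≠ 0`. -/
def hypContact (D : Fin d → Derivation k S S) (b : ℕ) (Bc : ℕ → S)
    {K : Type} [Field K] [Algebra k K] (φ : Polynomial S →ₐ[k] PowerSeries K) :
    Subalgebra (PowerSeries K) (Polynomial (PowerSeries K)) :=
  Algebra.adjoin (PowerSeries K)
    (insert
      (Polynomial.C ((PowerSeries.X : PowerSeries K) ^ tOrd (φ Polynomial.X)) * Polynomial.X)
      {p : Polynomial (PowerSeries K) | ∃ (g : S) (l : ℕ),
        (Polynomial.C g * Polynomial.X ^ l : Polynomial S) ∈ hypElim k d S D b Bc ∧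
        φ (Polynomial.C g) ≠ 0 ∧
        p = Polynomial.C (φ (Polynomial.C g)) * Polynomial.X ^ l})

/-!
Let `q` be the minimum of `ν(B_i) / (b - i)`, attained at `i`. Since `B_i ∈ m ^ (b - i)`, `q ≥ 1`,
and then `⊕ m ^ ⌈q l⌉ W ^ l` is differentially closed; hence passing to the differential closure
does not lower the order and `ord(G_X^{(d)}) = q`.

Restrict `f` to a line `z_j = c_j t` along which the leading form of `B_i` does not vanish and all
`c_j ≠ 0`. By Newton–Puiseux the restricted polynomial has, after a ramification `t ↦ t ^ n`, a
nonzero root `r(t)`; this gives the arc `z_j = c_j t ^ n`, `x = r(t)`. The Newton polygon forces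
`ord r ≥ n q ≥ n`, so the order of the arc is `n`, whereas its contact algebra has order exactly
`n q`: no generator has smaller order, and the image of `B_i W ^ (b - i)` attains it.

For Newton–Puiseux, a Tschirnhaus translation kills the coefficient next to the leading one, and
scaling away the steepest edge of the Newton polygon makes the reduction modulo `t` differ from a
power of `x`. That reduction has a root, which cannot have full multiplicity because the next
coefficient vanishes, and Weierstrass preparation at this root splits off a factor of smaller
degree.
-/

section Weierstrass

open IsLocalRing

variable {A κ : Type*} [CommRing A] [Field κ]

lemma dvd_of_coe_dvd_coe {I : Ideal A} [IsAdicComplete I A] {f Q : A[X]}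
    (hf : f.IsDistinguishedAt I) (h : (f : PowerSeries A) ∣ Q) : f ∣ Q := by
  rw [← Ideal.mem_span_singleton, ← Ideal.Quotient.eq_zero_iff_mem] at h ⊢
  apply hf.algEquivQuotient.injective
  simpa using h

lemma order_coe_toNat (p : κ[X]) : (p : PowerSeries κ).order.toNat = p.natTrailingDegree := by
  rcases eq_or_ne p 0 with rfl | hp
  · simp
  have : (p : PowerSeries κ).order = p.natTrailingDegree := by
    rw [PowerSeries.order_eq_nat]
    simpa using ⟨hp, fun i hi => coeff_eq_zero_of_lt_natTrailingDegree hi⟩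
  simp [this]

lemma support_map_eq_support_map_residue [IsLocalRing A] (π : A →+* κ) [IsLocalHom π] (Q : A[X]) :
    (Q.map π).support = (Q.map (residue A)).support := by
  ext n
  rw [mem_support_iff, mem_support_iff, coeff_map, coeff_map, residue_ne_zero_iff_isUnit,
    ← isUnit_iff_ne_zero, isUnit_map_iff]

/-- The Weierstrass factor of a polynomial, seen as a power series with the same coefficients,
divides it already as a polynomial. -/
lemma exists_monic_dvd_natDegree_eq [IsLocalRing A] [IsAdicComplete (maximalIdeal A) A]
    (π : A →+* κ) [IsLocalHom π] {Q : A[X]} (hQ : Q.map π ≠ 0) :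
    ∃ f : A[X], f.Monic ∧ f ∣ Q ∧ f.natDegree = (Q.map π).natTrailingDegree := by
  have hsupp := support_map_eq_support_map_residue π Q
  have hcoe : (Q : PowerSeries A).map (residue A) = (Q.map (residue A) : (ResidueField A)[X]) := by
    ext; simp
  obtain ⟨f, h, H⟩ := PowerSeries.exists_isWeierstrassFactorization (g := (Q : PowerSeries A)) <| by
    rwa [hcoe, Ne, Polynomial.coe_eq_zero_iff, ← support_eq_empty, ← hsupp, support_eq_empty]
  refine ⟨f, H.isDistinguishedAt.monic,
    dvd_of_coe_dvd_coe H.isDistinguishedAt ⟨h, H.eq_mul⟩, ?_⟩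
  rw [H.natDegree_eq_toNat_order_map, hcoe, order_coe_toNat, natTrailingDegree, natTrailingDegree,
    trailingDegree, trailingDegree, hsupp]

end Weierstrass

section Taylor

variable {R : Type*} [CommRing R]

lemma nextCoeff_taylor (a : R) (P : R[X]) :
    (taylor a P).nextCoeff = P.nextCoeff + P.natDegree * P.leadingCoeff * a := by
  rcases hn : P.natDegree with _ | n
  · simp [nextCoeff, hn]
  have hder : (hasseDeriv n P).natDegree ≤ 1 := by
    simpa [hn] using natDegree_hasseDeriv_le P n
  rw [nextCoeff_of_natDegree_pos (by simp [hn]), nextCoeff_of_natDegree_pos (by simp [hn]),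
    natDegree_taylor, leadingCoeff, hn, add_tsub_cancel_right, taylor_coeff,
    eval_eq_sum_range' (Nat.lt_succ_of_le hder)]
  simp [Finset.sum_range_succ, hasseDeriv_coeff, Nat.add_comm 1 n, mul_assoc]

lemma exists_nextCoeff_taylor_eq_zero {P : R[X]} (hP : P.Monic)
    (hunit : IsUnit (P.natDegree : R)) : ∃ a, (taylor a P).nextCoeff = 0 := by
  obtain ⟨u, hu⟩ := hunit
  exact ⟨-(↑u⁻¹ * P.nextCoeff), by simp [nextCoeff_taylor, hP.leadingCoeff, ← hu]⟩

lemma natTrailingDegree_taylor_lt {κ : Type*} [Field κ] [CharZero κ] {p : κ[X]} (hp : p.Monic)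
    (hnext : p.nextCoeff = 0) (hlt : p.natTrailingDegree < p.natDegree) (a : κ) :
    (taylor a p).natTrailingDegree < (taylor a p).natDegree := by
  refine (natTrailingDegree_le_natDegree _).lt_of_ne fun h => hlt.ne ?_
  have hmonic : (taylor a p).Monic := by simpa [Monic] using hp
  have hpow := (hmonic.eq_X_pow_iff_natTrailingDegree_eq_natDegree).2 h
  have hnext' := congrArg nextCoeff hpow
  rw [monic_X.nextCoeff_pow, nextCoeff_taylor, hnext, hp.leadingCoeff] at hnext'
  have ha : a = 0 := by
    simpa [nextCoeff, (Nat.zero_le _).trans_lt hlt |>.ne'] using hnext'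
  rwa [ha, taylor_zero] at h

end Taylor

section Newton

variable {R : Type*} [CommRing R]

lemma degree_sum_range_C_mul_X_pow_lt (q : ℕ → R) {m n : ℕ} (hmn : m ≤ n) :
    (∑ j ∈ Finset.range m, C (q j) * X ^ j).degree < (n : WithBot ℕ) := by
  rw [Finset.sum_range]
  exact (degree_sum_fin_lt fun j : Fin m => q j).trans_le (by exact_mod_cast hmn)

lemma exists_eq_scaleRoots_of_pow_dvd_coeff {P : R[X]} (hP : P.Monic) {s : R}
    (hs : ∀ j, s ^ (P.natDegree - j) ∣ P.coeff j) : ∃ Q : R[X], Q.Monic ∧ P = Q.scaleRoots s := by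
  nontriviality R
  choose q hq using hs
  have hlt := degree_sum_range_C_mul_X_pow_lt q (le_refl P.natDegree)
  have hdeg : (X ^ P.natDegree + ∑ j ∈ Finset.range P.natDegree, C (q j) * X ^ j).natDegree
      = P.natDegree := by
    rw [natDegree_add_eq_left_of_degree_lt (by rwa [degree_X_pow]), natDegree_X_pow]
  refine ⟨_, monic_X_pow_add hlt, ext fun j => ?_⟩
  rw [coeff_scaleRoots, hdeg]
  rcases lt_trichotomy j P.natDegree with h | rfl | h
  · rw [hq j, mul_comm]
    congr 1
    simp [coeff_X_pow, h, h.ne]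
  · simp [hP.leadingCoeff]
  · simp [coeff_X_pow, h.not_gt, h.ne', coeff_eq_zero_of_natDegree_lt h]

lemma nextCoeff_scaleRoots (Q : R[X]) (s : R) : (Q.scaleRoots s).nextCoeff = Q.nextCoeff * s := by
  rcases eq_or_ne Q.natDegree 0 with h | h
  · simp [nextCoeff, h]
  · have : Q.natDegree - (Q.natDegree - 1) = 1 := by omega
    simp [nextCoeff, h, coeff_scaleRoots, this]

open scoped PowerSeries

lemma X_pow_pow_dvd_expand {c : ℕ} (hc : c ≠ 0) {f : R⟦X⟧} {N m : ℕ}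
    (h : N * m ≤ c * f.order.toNat) : (PowerSeries.X ^ N) ^ m ∣ PowerSeries.expand c hc f := by
  rw [← pow_mul]
  refine (pow_dvd_pow _ h).trans ?_
  rw [pow_mul, ← PowerSeries.expand_X c hc, ← map_pow]
  exact map_dvd _ PowerSeries.X_pow_order_dvd

lemma constantCoeff_ne_zero_of_expand_eq_mul_X_pow {c : ℕ} (hc : c ≠ 0) {f g : R⟦X⟧} (hf : f ≠ 0)
    (h : PowerSeries.expand c hc f = g * PowerSeries.X ^ (c * f.order.toNat)) :
    PowerSeries.constantCoeff g ≠ 0 := by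
  have hlead := congrArg (PowerSeries.coeff (c * f.order.toNat)) h
  rw [PowerSeries.coeff_expand_mul, PowerSeries.coeff_mul_X_pow', if_pos le_rfl, Nat.sub_self,
    PowerSeries.coeff_zero_eq_constantCoeff] at hlead
  exact hlead ▸ PowerSeries.coeff_order hf

/-- Newton polygon: after the ramification `t ↦ t ^ c`, the steepest edge of the Newton polygon
has the integral slope `N`, and scaling it away leaves a coefficient of order zero. -/
lemma exists_map_expand_eq_scaleRoots {K : Type*} [CommRing K] [Nontrivial K] {P : K⟦X⟧[X]}
    (hP : P.Monic) (hlt : P.natTrailingDegree < P.natDegree) :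
    ∃ (c : ℕ) (hc : c ≠ 0) (N : ℕ) (Q : K⟦X⟧[X]), Q.Monic ∧
      P.map (PowerSeries.expand c hc).toRingHom = Q.scaleRoots (PowerSeries.X ^ N) ∧
      (Q.map PowerSeries.constantCoeff).natTrailingDegree < Q.natDegree := by
  classical
  obtain ⟨i, hi, hmin⟩ := Finset.exists_min_image
    ((Finset.range P.natDegree).filter fun j => P.coeff j ≠ 0)
    (fun j => ((P.coeff j).order.toNat : ℚ) / (P.natDegree - j : ℕ))
    ⟨P.natTrailingDegree, by simpa [hlt] using hP.ne_zero⟩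
  simp only [Finset.mem_filter, Finset.mem_range] at hi hmin
  set c := P.natDegree - i
  set N := (P.coeff i).order.toNat
  have hc : c ≠ 0 := Nat.sub_ne_zero_of_lt hi.1
  have hdvd (j : ℕ) :
      (PowerSeries.X ^ N) ^ (P.natDegree - j) ∣ PowerSeries.expand c hc (P.coeff j) := by
    rcases eq_or_ne (P.coeff j) 0 with hj0 | hj0
    · simp [hj0]
    rcases le_or_gt P.natDegree j with hj | hj
    · simp [Nat.sub_eq_zero_of_le hj]
    have hslope := hmin j ⟨hj, hj0⟩
    rw [div_le_div_iff₀ (mod_cast Nat.pos_of_ne_zero hc) (mod_cast Nat.sub_pos_of_lt hj)] at hslope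
    refine X_pow_pow_dvd_expand hc ?_
    rw [mul_comm c]
    exact_mod_cast hslope
  have hdeg : (P.map (PowerSeries.expand c hc).toRingHom).natDegree = P.natDegree :=
    hP.natDegree_map _
  obtain ⟨Q, hQ, hPQ⟩ := exists_eq_scaleRoots_of_pow_dvd_coeff (s := PowerSeries.X ^ N)
    (hP.map (PowerSeries.expand c hc).toRingHom) fun j => by
      rw [hdeg, coeff_map]; exact hdvd j
  rw [hPQ, natDegree_scaleRoots] at hdeg
  refine ⟨c, hc, N, Q, hQ, hPQ, (natTrailingDegree_le_of_ne_zero (n := i) ?_).trans_lt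
    (hi.1.trans_eq hdeg.symm)⟩
  rw [coeff_map]
  refine constantCoeff_ne_zero_of_expand_eq_mul_X_pow hc hi.2 ?_
  simpa [coeff_scaleRoots, hdeg, ← pow_mul, mul_comm N] using congrArg (coeff · i) hPQ

end Newton

section Puiseux

open scoped PowerSeries

lemma expand_injective {K : Type*} [CommRing K] {n : ℕ} (hn : n ≠ 0) :
    Function.Injective (PowerSeries.expand n hn : K⟦X⟧ → K⟦X⟧) := fun f g h => by
  ext m
  simpa only [PowerSeries.coeff_expand_mul] using congrArg (PowerSeries.coeff (n * m)) h

/-- A polynomial `P` over `K⟦t⟧` has a Puiseux root if it has a root in `K⟦t ^ (1 / n)⟧` for some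
`n`; that ring is encoded as `K⟦t⟧`, regarded as an extension of itself by `t ↦ t ^ n`. -/
def HasPuiseuxRoot {K : Type*} [CommRing K] (P : K⟦X⟧[X]) : Prop :=
  ∃ (n : ℕ) (hn : n ≠ 0) (r : K⟦X⟧), P.eval₂ (PowerSeries.expand n hn).toRingHom r = 0

namespace HasPuiseuxRoot

variable {K : Type*} [CommRing K] {P Q : K⟦X⟧[X]}

lemma of_dvd (h : HasPuiseuxRoot P) (hPQ : P ∣ Q) : HasPuiseuxRoot Q := by
  obtain ⟨n, hn, r, hr⟩ := h
  exact ⟨n, hn, r, eval₂_eq_zero_of_dvd_of_eval₂_eq_zero _ _ hPQ hr⟩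

lemma of_taylor {a : K⟦X⟧} (h : HasPuiseuxRoot (taylor a P)) : HasPuiseuxRoot P := by
  obtain ⟨n, hn, r, hr⟩ := h
  rw [taylor_apply, eval₂_comp] at hr
  exact ⟨n, hn, _, hr⟩

lemma scaleRoots (h : HasPuiseuxRoot P) (s : K⟦X⟧) : HasPuiseuxRoot (P.scaleRoots s) := by
  obtain ⟨n, hn, r, hr⟩ := h
  exact ⟨n, hn, _, scaleRoots_eval₂_eq_zero _ hr⟩

lemma of_map_expand {c : ℕ} {hc : c ≠ 0}
    (h : HasPuiseuxRoot (P.map (PowerSeries.expand c hc).toRingHom)) : HasPuiseuxRoot P := by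
  obtain ⟨n, hn, r, hr⟩ := h
  have hcomp : (PowerSeries.expand n hn).toRingHom.comp (PowerSeries.expand c hc).toRingHom
      = (PowerSeries.expand (n * c) (mul_ne_zero hn hc)).toRingHom (R := K) :=
    RingHom.ext fun f => (PowerSeries.expand_mul n hn c hc f).symm
  rw [eval₂_map, hcomp] at hr
  exact ⟨n * c, mul_ne_zero hn hc, r, hr⟩

end HasPuiseuxRoot

variable {K : Type*} [Field K]

instance isLocalHom_constantCoeff : IsLocalHom (PowerSeries.constantCoeff : K⟦X⟧ →+* K) :=
  ⟨fun _ => PowerSeries.isUnit_iff_constantCoeff.2⟩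

instance isAdicComplete_maximalIdeal :
    IsAdicComplete (IsLocalRing.maximalIdeal K⟦X⟧) K⟦X⟧ := by
  rw [PowerSeries.maximalIdeal_eq_span_X]
  infer_instance

variable [IsAlgClosed K] [CharZero K]

lemma exists_monic_dvd_taylor_natDegree_lt {Q : K⟦X⟧[X]} (hQ : Q.Monic) (hnext : Q.nextCoeff = 0)
    (hlt : (Q.map PowerSeries.constantCoeff).natTrailingDegree < Q.natDegree) :
    ∃ (a : K⟦X⟧) (f : K⟦X⟧[X]),
      f.Monic ∧ f ∣ taylor a Q ∧ f.natDegree ≠ 0 ∧ f.natDegree < Q.natDegree := by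
  set q := Q.map PowerSeries.constantCoeff with hq
  have hqmonic : q.Monic := hQ.map _
  have hqdeg : q.natDegree = Q.natDegree := hQ.natDegree_map _
  have hqnext : q.nextCoeff = 0 := by
    rw [hq, nextCoeff_map_of_leadingCoeff_ne_zero _ (by simp [hQ.leadingCoeff]), hnext, map_zero]
  obtain ⟨a, ha⟩ := IsAlgClosed.exists_root q (by
    rw [degree_eq_natDegree hqmonic.ne_zero]; exact_mod_cast (hqdeg.trans_gt (pos_of_gt hlt)).ne')
  have hmap : (taylor (PowerSeries.C a) Q).map PowerSeries.constantCoeff = taylor a q := by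
    rw [map_taylor, PowerSeries.constantCoeff_C]
  have hmonic : (taylor a q).Monic := by simpa [Monic] using hqmonic
  obtain ⟨f, hf, hdvd, hdeg⟩ := exists_monic_dvd_natDegree_eq PowerSeries.constantCoeff
    (Q := taylor (PowerSeries.C a) Q) (by rw [hmap]; exact hmonic.ne_zero)
  rw [hmap] at hdeg
  refine ⟨_, f, hf, hdvd, ?_, ?_⟩
  · rw [hdeg, natTrailingDegree_ne_zero, taylor_coeff_zero]
    exact ⟨hmonic.ne_zero, ha⟩
  · rw [hdeg, ← hqdeg, ← natDegree_taylor q a]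
    exact natTrailingDegree_taylor_lt hqmonic hqnext (hqdeg ▸ hlt) a

theorem hasPuiseuxRoot_of_monic {P : K⟦X⟧[X]} (hP : P.Monic) (hdeg : P.natDegree ≠ 0) :
    HasPuiseuxRoot P := by
  induction hn : P.natDegree using Nat.strong_induction_on generalizing P with
  | _ n ih =>
  have hunit : IsUnit (P.natDegree : K⟦X⟧) := by
    rw [PowerSeries.isUnit_iff_constantCoeff, map_natCast, isUnit_iff_ne_zero]
    exact_mod_cast hdeg
  obtain ⟨a, ha⟩ := exists_nextCoeff_taylor_eq_zero hP hunit
  refine HasPuiseuxRoot.of_taylor (a := a) ?_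
  rw [← natDegree_taylor P a] at hn hdeg
  have hT : (taylor a P).Monic := by simpa [Monic] using hP
  rcases (natTrailingDegree_le_natDegree (taylor a P)).eq_or_lt with heq | hlt
  · rw [hT.eq_X_pow_iff_natTrailingDegree_eq_natDegree.2 heq]
    exact ⟨1, one_ne_zero, 0, by rw [eval₂_X_pow, zero_pow hdeg]⟩
  obtain ⟨c, hc, N, Q, hQ, hPQ, hQlt⟩ := exists_map_expand_eq_scaleRoots hT hlt
  have hQdeg : Q.natDegree = (taylor a P).natDegree := by
    rw [← natDegree_scaleRoots Q, ← hPQ, hT.natDegree_map]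
  have hQnext : Q.nextCoeff = 0 := by
    have := congrArg nextCoeff hPQ
    rw [nextCoeff_scaleRoots, nextCoeff_map_of_leadingCoeff_ne_zero _
      (by simp [hT.leadingCoeff]), ha, map_zero] at this
    exact (mul_eq_zero.1 this.symm).resolve_right (pow_ne_zero _ PowerSeries.X_ne_zero)
  obtain ⟨s, f, hf, hdvd, hf0, hfdeg⟩ := exists_monic_dvd_taylor_natDegree_lt hQ hQnext hQlt
  have hroot := ih f.natDegree (hfdeg.trans_eq (hQdeg.trans hn)) hf hf0 rfl
  refine HasPuiseuxRoot.of_map_expand (c := c) (hc := hc) ?_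
  rw [hPQ]
  exact (hroot.of_dvd hdvd).of_taylor.scaleRoots _

theorem exists_ne_zero_eval₂_expand_eq_zero {P : K⟦X⟧[X]} (hP : P.Monic)
    (hlt : P.natTrailingDegree < P.natDegree) :
    ∃ (n : ℕ) (hn : n ≠ 0) (r : K⟦X⟧), r ≠ 0 ∧
      P.eval₂ (PowerSeries.expand n hn).toRingHom r = 0 := by
  obtain ⟨Q, hQ⟩ : X ^ P.natTrailingDegree ∣ P :=
    X_pow_dvd_iff.2 fun _ hj => coeff_eq_zero_of_lt_natTrailingDegree hj
  have hQmonic : Q.Monic := (monic_X_pow _).of_mul_monic_left (hQ ▸ hP)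
  have hdeg : P.natDegree = P.natTrailingDegree + Q.natDegree := by
    conv_lhs => rw [hQ, (monic_X_pow _).natDegree_mul hQmonic, natDegree_X_pow]
  have hQ0 : Q.coeff 0 ≠ 0 := by
    rw [← coeff_X_pow_mul Q P.natTrailingDegree 0, ← hQ, zero_add]
    exact trailingCoeff_nonzero_iff_nonzero.2 hP.ne_zero
  obtain ⟨n, hn, r, hr⟩ := hasPuiseuxRoot_of_monic hQmonic (by omega)
  refine ⟨n, hn, r, ?_, eval₂_eq_zero_of_dvd_of_eval₂_eq_zero _ _ ⟨_, hQ.trans (mul_comm _ _)⟩ hr⟩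
  rintro rfl
  rw [eval₂_at_zero] at hr
  exact hQ0 (expand_injective hn (hr.trans (map_zero _).symm))

end Puiseux

section SlopeSubalgebra

open scoped NNReal

variable {R : Type*} [CommRing R] {I : Ideal R}

lemma mem_pow_iff_le_adicOrder [IsHausdorff I R] {f : R} (hf : f ≠ 0) {n : ℕ} :
    f ∈ I ^ n ↔ n ≤ adicOrder I f := by
  obtain ⟨M, hM⟩ : ∃ M, f ∉ I ^ M := by
    by_contra! h
    exact hf (IsHausdorff.haus ‹_› f fun n => by
      rw [SModEq.zero, smul_eq_mul, Ideal.mul_top]; exact h n)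
  have hbdd : BddAbove {n : ℕ | f ∈ I ^ n} :=
    ⟨M, fun m hm => not_lt.1 fun hlt => hM (Ideal.pow_le_pow_right hlt.le hm)⟩
  refine ⟨fun h => le_csSup hbdd h, fun hn => ?_⟩
  exact Ideal.pow_le_pow_right hn (Nat.sSup_mem ⟨0, by simp⟩ hbdd)

/-- The graded subalgebra `⊕ I ^ ⌈q l⌉ W ^ l` of `R[W]`. Membership of `G` in it encodes the lower
bound `q ≤ ord(G)`, and it is differentially closed as soon as `1 ≤ q`. -/
def slopeSubalgebra (I : Ideal R) (q : ℝ≥0) : Subalgebra R R[X] where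
  carrier := {p | ∀ n : ℕ, p.coeff n ∈ I ^ ⌈q * n⌉₊}
  add_mem' := fun ha hb n => by
    rw [coeff_add]
    exact add_mem (ha n) (hb n)
  mul_mem' := fun {a b} ha hb n => by
    rw [coeff_mul]
    refine sum_mem fun x hx => ?_
    have hmul := Ideal.mul_mem_mul (ha x.1) (hb x.2)
    rw [← pow_add] at hmul
    refine Ideal.pow_le_pow_right ?_ hmul
    rw [← Finset.HasAntidiagonal.mem_antidiagonal.1 hx, Nat.cast_add, mul_add]
    exact Nat.ceil_add_le _ _
  algebraMap_mem' := fun r n => by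
    rw [Polynomial.algebraMap_apply, Algebra.algebraMap_self, RingHom.id_apply, coeff_C]
    split_ifs with h <;> simp [h]

lemma C_mul_X_pow_mem_slopeSubalgebra {q : ℝ≥0} {f : R} {l : ℕ} :
    C f * X ^ l ∈ slopeSubalgebra I q ↔ f ∈ I ^ ⌈q * l⌉₊ := by
  refine ⟨fun h => by simpa using h l, fun h n => ?_⟩
  rw [coeff_C_mul_X_pow]
  split_ifs with hn
  · exact hn ▸ h
  · exact zero_mem _

lemma graded_slopeSubalgebra (q : ℝ≥0) : Graded (slopeSubalgebra I q) :=
  fun _ hp n => C_mul_X_pow_mem_slopeSubalgebra.2 (hp n)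

lemma derivation_mem_pow {k : Type*} [CommRing k] [Algebra k R] (D : Derivation k R R) {n : ℕ}
    {f : R} (hf : f ∈ I ^ (n + 1)) : D f ∈ I ^ n := by
  induction n generalizing f with
  | zero => simp
  | succ n ih =>
    rw [pow_succ] at hf
    refine Submodule.mul_induction_on hf (fun a ha b hb => ?_) fun a b ha hb => ?_
    · rw [Derivation.leibniz, smul_eq_mul, smul_eq_mul, pow_succ I n, mul_comm b]
      exact add_mem (Ideal.mul_mem_right _ _ (pow_succ I n ▸ ha)) (Ideal.mul_mem_mul (ih ha) hb)
    · rw [map_add]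
      exact add_mem ha hb

lemma diffClosed_slopeSubalgebra {k ι : Type*} [CommRing k] [Algebra k R]
    (D : ι → Derivation k R R) {q : ℝ≥0} (hq : 1 ≤ q) : DiffClosed D (slopeSubalgebra I q) := by
  simp only [DiffClosed, C_mul_X_pow_mem_slopeSubalgebra]
  refine ⟨fun f l _ h => Ideal.pow_le_pow_right (Nat.ceil_mono ?_) h,
    fun f l j h => derivation_mem_pow (D j) (Ideal.pow_le_pow_right ?_ h)⟩
  · gcongr
    simp
  · rw [← Nat.ceil_add_one (by positivity)]
    refine Nat.ceil_mono ?_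
    push_cast
    linarith

lemma reesOrder_eq [IsHausdorff I R] {G : Subalgebra R R[X]} {q : ℝ≥0}
    (hG : G ≤ slopeSubalgebra I q) {g : R} (hg : g ≠ 0) {c : ℕ} (hc : c ≠ 0)
    (hgG : C g * X ^ c ∈ G) (hord : (adicOrder I g : ℝ≥0) = q * c) : reesOrder I G = q := by
  refine le_antisymm (sInf_le ⟨g, c, hg, Nat.one_le_iff_ne_zero.2 hc, hgG, ?_⟩) (le_sInf ?_)
  · rw [← ENNReal.coe_natCast, hord, ENNReal.coe_mul, ENNReal.coe_natCast,
      ENNReal.mul_div_cancel_right (by exact_mod_cast hc) (by simp)]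
  · rintro _ ⟨f, l, hf, hl, hfG, rfl⟩
    have hle := (mem_pow_iff_le_adicOrder hf).1 (C_mul_X_pow_mem_slopeSubalgebra.1 (hG hfG))
    rw [ENNReal.le_div_iff_mul_le (by simp; omega) (by simp)]
    exact_mod_cast Nat.ceil_le.1 hle

end SlopeSubalgebra

section EliminationAlgebra

open scoped NNReal

lemma exists_slope {R : Type*} [CommRing R] {I : Ideal R} [IsHausdorff I R] {m b : ℕ} (hmb : m < b)
    {B : ℕ → R} (hmem : ∀ i ≤ m, B i ∈ I ^ (b - i)) (hne : ∃ i ≤ m, B i ≠ 0) :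
    ∃ q : ℝ≥0, 1 ≤ q ∧ (∃ i ≤ m, B i ≠ 0 ∧ (adicOrder I (B i) : ℝ≥0) = q * (b - i : ℕ)) ∧
      ∀ j ≤ m, B j ∈ I ^ ⌈q * (b - j : ℕ)⌉₊ := by
  classical
  have hpos {j : ℕ} (hj : j ≤ m) : (0 : ℝ≥0) < (b - j : ℕ) :=
    Nat.cast_pos.2 (Nat.sub_pos_of_lt (hj.trans_lt hmb))
  obtain ⟨i, hi, hmin⟩ := Finset.exists_min_image
    ((Finset.range (m + 1)).filter fun j => B j ≠ 0)
    (fun j => (adicOrder I (B j) : ℝ≥0) / (b - j : ℕ)) <| by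
      obtain ⟨i, hi, hi0⟩ := hne
      exact ⟨i, Finset.mem_filter.2 ⟨Finset.mem_range_succ_iff.2 hi, hi0⟩⟩
  simp only [Finset.mem_filter, Finset.mem_range_succ_iff] at hi hmin
  refine ⟨_, ?_, ⟨i, hi.1, hi.2, (div_mul_cancel₀ _ (hpos hi.1).ne').symm⟩, fun j hj => ?_⟩
  · rw [one_le_div (hpos hi.1), Nat.cast_le]
    exact (mem_pow_iff_le_adicOrder hi.2).1 (hmem i hi.1)
  · rcases eq_or_ne (B j) 0 with hj0 | hj0
    · exact hj0 ▸ zero_mem _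
    · rw [mem_pow_iff_le_adicOrder hj0, Nat.ceil_le, ← le_div_iff₀ (hpos hj)]
      exact hmin j ⟨hj, hj0⟩

variable {k : Type} [Field k] {d : ℕ} {S : Type} [CommRing S] [Algebra k S]
variable {D : Fin d → Derivation k S S} {b : ℕ} {Bc : ℕ → S}

lemma C_mul_X_pow_mem_hypElim {i : ℕ} (hi : i ≤ b - 2) :
    C (Bc i) * X ^ (b - i) ∈ hypElim k d S D b Bc :=
  Algebra.mem_sInf.2 fun _ hG => hG.1 ⟨i, hi, rfl⟩

variable [Algebra (MvPolynomial (Fin d) k) S]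

lemma hypElim_le_slopeSubalgebra {q : ℝ≥0} (hq : 1 ≤ q)
    (hBc : ∀ j ≤ b - 2, Bc j ∈ mS k d S ^ ⌈q * (b - j : ℕ)⌉₊) :
    hypElim k d S D b Bc ≤ slopeSubalgebra (mS k d S) q := by
  refine sInf_le ⟨?_, graded_slopeSubalgebra q, diffClosed_slopeSubalgebra D hq⟩
  rintro _ ⟨j, hj, rfl⟩
  exact C_mul_X_pow_mem_slopeSubalgebra.2 (hBc j hj)

instance isHausdorff_mS [IsSLoc k d S] : IsHausdorff (mS k d S) S := by
  have : IsNoetherianRing S :=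
    IsLocalization.isNoetherianRing (mPoly k d).primeCompl S inferInstance
  have : IsLocalRing S := IsLocalization.AtPrime.isLocalRing S (mPoly k d)
  rw [mS, IsLocalization.AtPrime.map_eq_maximalIdeal (mPoly k d) S]
  infer_instance

end EliminationAlgebra

section TOrder

open scoped NNReal PowerSeries

variable {K : Type*}

lemma mem_tId_pow_iff [CommRing K] {g : K⟦X⟧} {n : ℕ} : g ∈ tId K ^ n ↔ PowerSeries.X ^ n ∣ g := by
  rw [tId, Ideal.span_singleton_pow, Ideal.mem_span_singleton]

instance isHausdorff_tId [CommRing K] : IsHausdorff (tId K) K⟦X⟧ :=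
  inferInstanceAs (IsHausdorff (.span {PowerSeries.X}) K⟦X⟧)

lemma tOrd_eq_toNat_order [CommRing K] (g : K⟦X⟧) : tOrd g = g.order.toNat := by
  rcases eq_or_ne g 0 with rfl | hg
  · simp [tOrd, adicOrder]
  refine eq_of_forall_le_iff fun n => ?_
  rw [tOrd, ← mem_pow_iff_le_adicOrder hg, mem_tId_pow_iff, pow_dvd_iff_le_emultiplicity,
    ← PowerSeries.order_eq_emultiplicity_X, ← ENat.natCast_le_natCast,
    ENat.natCast_toNat (by simpa using hg)]

lemma tOrd_expand [CommRing K] {n : ℕ} (hn : n ≠ 0) (g : K⟦X⟧) :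
    tOrd (PowerSeries.expand n hn g) = n * tOrd g := by
  simp [tOrd_eq_toNat_order, PowerSeries.order_expand, ENat.toNat_mul]

lemma tOrd_pow [CommRing K] [IsDomain K] (g : K⟦X⟧) (n : ℕ) : tOrd (g ^ n) = n * tOrd g := by
  simp [tOrd_eq_toNat_order, PowerSeries.order_pow, ENat.toNat_mul]

lemma expand_mem_tId_pow [CommRing K] {n : ℕ} (hn : n ≠ 0) {g : K⟦X⟧} (hg : g ∈ tId K) :
    PowerSeries.expand n hn g ∈ tId K ^ n := by
  rw [← pow_one (tId K), mem_tId_pow_iff, pow_one] at hg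
  rw [mem_tId_pow_iff, ← PowerSeries.expand_X n hn]
  exact map_dvd _ hg

lemma mem_tId_of_one_le_tOrd [CommRing K] {g : K⟦X⟧} (hg : 1 ≤ tOrd g) : g ∈ tId K := by
  rw [← pow_one (tId K)]
  refine (mem_pow_iff_le_adicOrder ?_).2 hg
  rintro rfl
  simp [tOrd_eq_toNat_order] at hg

lemma le_tOrd_of_eval_eq_zero [CommRing K] [IsDomain K] {P : K⟦X⟧[X]} (hP : P.Monic) {s : ℝ≥0}
    (hcoeff : ∀ j < P.natDegree, P.coeff j ∈ tId K ^ ⌈s * (P.natDegree - j : ℕ)⌉₊) {r : K⟦X⟧}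
    (hr : r ≠ 0) (hroot : P.eval r = 0) : s ≤ tOrd r := by
  by_contra! hlt
  have hterm {j : ℕ} (hj : j < P.natDegree) :
      P.coeff j * r ^ j ∈ tId K ^ (P.natDegree * tOrd r + 1) := by
    have hmul := Ideal.mul_mem_mul (hcoeff j hj)
      (Ideal.pow_mem_pow ((mem_pow_iff_le_adicOrder (I := tId K) hr).2 le_rfl) j)
    rw [← pow_mul, ← pow_add] at hmul
    refine Ideal.pow_le_pow_right ?_ hmul
    have hceil : tOrd r * (P.natDegree - j) < ⌈s * (P.natDegree - j : ℕ)⌉₊ := by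
      rw [Nat.lt_ceil, Nat.cast_mul]
      have : (0 : ℝ≥0) < (P.natDegree - j : ℕ) := mod_cast Nat.sub_pos_of_lt hj
      gcongr
    calc P.natDegree * tOrd r + 1
        = tOrd r * (P.natDegree - j) + 1 + tOrd r * j := by
          rw [add_right_comm, ← mul_add, Nat.sub_add_cancel hj.le, mul_comm]
      _ ≤ ⌈s * (P.natDegree - j : ℕ)⌉₊ + tOrd r * j := by gcongr; exact hceil
  have hpow : r ^ P.natDegree ∈ tId K ^ (P.natDegree * tOrd r + 1) := by
    rw [eval_eq_sum_range, Finset.sum_range_succ, hP.coeff_natDegree, one_mul] at hroot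
    rw [eq_neg_of_add_eq_zero_right hroot]
    exact neg_mem (sum_mem fun j hj => hterm (Finset.mem_range.1 hj))
  rw [mem_pow_iff_le_adicOrder (pow_ne_zero _ hr), ← tOrd, tOrd_pow] at hpow
  omega

end TOrder

section LeadingForms

variable {k : Type} [Field k] {d : ℕ}

lemma mem_mPoly_pow_of_homogeneousComponent_eq_zero {n : ℕ} {p : MvPolynomial (Fin d) k}
    (hp : ∀ e < n, MvPolynomial.homogeneousComponent e p = 0) : p ∈ mPoly k d ^ n := by
  have hle : MvPolynomial.idealOfVars (Fin d) k ≤ mPoly k d := by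
    rw [MvPolynomial.idealOfVars, Ideal.span_le]
    rintro _ ⟨j, rfl⟩
    simp [mPoly, RingHom.mem_ker]
  refine Ideal.pow_right_mono hle n ((MvPolynomial.mem_pow_idealOfVars_iff' _ _).2 fun u hu => ?_)
  simpa [MvPolynomial.coeff_homogeneousComponent] using
    congrArg (MvPolynomial.coeff u) (hp u.degree hu)

lemma exists_homogeneousComponent_ne_zero {S : Type} [CommRing S]
    [Algebra (MvPolynomial (Fin d) k) S] [IsSLoc k d S] {s : S} (hs : s ≠ 0)
    {p : MvPolynomial (Fin d) k} {y : (mPoly k d).primeCompl}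
    (hps : s * algebraMap _ S (y : MvPolynomial (Fin d) k) = algebraMap _ S p) :
    ∃ e ≤ adicOrder (mS k d S) s, MvPolynomial.homogeneousComponent e p ≠ 0 := by
  by_contra! hp
  have hmem : algebraMap _ S p ∈ mS k d S ^ (adicOrder (mS k d S) s + 1) := by
    rw [mS, ← Ideal.map_pow]
    exact Ideal.mem_map_of_mem _
      (mem_mPoly_pow_of_homogeneousComponent_eq_zero fun e he => hp e (Nat.lt_succ_iff.1 he))
  rw [← hps, Ideal.mul_unit_mem_iff_mem _ (IsLocalization.map_units S y),
    mem_pow_iff_le_adicOrder hs] at hmem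
  omega

lemma exists_eval_ne_zero_forall_ne_zero {R σ : Type*} [CommRing R] [IsDomain R] [Infinite R]
    {p : MvPolynomial σ R} (hp : p ≠ 0) :
    ∃ c : σ → R, MvPolynomial.eval c p ≠ 0 ∧ ∀ j, c j ≠ 0 := by
  by_contra! hall
  refine hp (MvPolynomial.funext_set (fun _ => {0}ᶜ)
    (fun _ => (Set.finite_singleton (0 : R)).infinite_compl) fun c hc => ?_)
  rw [map_zero]
  by_contra hne
  obtain ⟨j, hj⟩ := hall c hne
  exact hc j trivial hj

end LeadingForms

section Lines

open scoped PowerSeries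

variable {k : Type} [Field k] {d : ℕ} (K : Type*) [CommRing K] [Algebra k K]

/-- Restriction of polynomials to the line `z_j = c_j t` through the origin. -/
def lineEval (c : Fin d → k) : MvPolynomial (Fin d) k →ₐ[k] K⟦X⟧ :=
  MvPolynomial.aeval fun j => PowerSeries.C (algebraMap k K (c j)) * PowerSeries.X

lemma lineEval_monomial (c : Fin d → k) (u : Fin d →₀ ℕ) (a : k) :
    lineEval K c (MvPolynomial.monomial u a) = PowerSeries.C (algebraMap k K
      (MvPolynomial.eval c (MvPolynomial.monomial u a))) * PowerSeries.X ^ u.degree := by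
  rw [lineEval, MvPolynomial.aeval_monomial, MvPolynomial.eval_monomial, Finsupp.prod, Finsupp.prod,
    Finsupp.degree_apply, ← Finset.prod_pow_eq_pow_sum]
  simp only [mul_pow, Finset.prod_mul_distrib, map_mul, map_prod, map_pow, mul_assoc,
    IsScalarTower.algebraMap_apply k K K⟦X⟧, PowerSeries.algebraMap_eq]

lemma coeff_lineEval (c : Fin d → k) (p : MvPolynomial (Fin d) k) (n : ℕ) :
    PowerSeries.coeff n (lineEval K c p) =
      algebraMap k K (MvPolynomial.eval c (MvPolynomial.homogeneousComponent n p)) := by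
  induction p using MvPolynomial.induction_on' with
  | monomial u a =>
    rw [lineEval_monomial, PowerSeries.coeff_C_mul_X_pow,
      MvPolynomial.homogeneousComponent_of_mem (MvPolynomial.isHomogeneous_monomial a rfl)]
    split_ifs <;> simp
  | add p q hp hq => simp only [map_add, hp, hq]

lemma constantCoeff_lineEval (c : Fin d → k) (p : MvPolynomial (Fin d) k) :
    PowerSeries.constantCoeff (lineEval K c p) =
      algebraMap k K (MvPolynomial.aeval (fun _ => (0 : k)) p) := by
  induction p using MvPolynomial.induction_on with
  | C a => simp [lineEval, PowerSeries.algebraMap_apply]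
  | add p q hp hq => simp only [map_add, hp, hq]
  | mul_X p j _ => simp [lineEval]

lemma isUnit_lineEval (c : Fin d → k) (y : (mPoly k d).primeCompl) :
    IsUnit (lineEval K c (y : MvPolynomial (Fin d) k)) := by
  rw [PowerSeries.isUnit_iff_constantCoeff, constantCoeff_lineEval]
  exact (isUnit_iff_ne_zero.2 y.2).map (algebraMap k K)

variable (S : Type) [CommRing S] [Algebra (MvPolynomial (Fin d) k) S] [Algebra k S]
  [IsScalarTower k (MvPolynomial (Fin d) k) S] [IsSLoc k d S]

/-- The extension of `lineEval` to the local ring `S`. -/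
def lineHom (c : Fin d → k) : S →ₐ[k] K⟦X⟧ :=
  IsLocalization.liftAlgHom (M := (mPoly k d).primeCompl) (f := lineEval K c) (isUnit_lineEval K c)

lemma lineHom_algebraMap (c : Fin d → k) (p : MvPolynomial (Fin d) k) :
    lineHom K S c (algebraMap _ S p) = lineEval K c p := by
  rw [lineHom, IsLocalization.liftAlgHom_apply, IsLocalization.lift_eq]
  rfl

lemma lineHom_zvar (c : Fin d → k) (j : Fin d) :
    lineHom K S c (zvar k d S j) = PowerSeries.C (algebraMap k K (c j)) * PowerSeries.X := by
  rw [zvar, lineHom_algebraMap, lineEval, MvPolynomial.aeval_X]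

lemma mS_le_comap_lineHom (c : Fin d → k) : mS k d S ≤ (tId K).comap (lineHom K S c) := by
  rw [mS, Ideal.map_le_iff_le_comap]
  intro p hp
  rw [Ideal.mem_comap, Ideal.mem_comap, lineHom_algebraMap, tId, Ideal.mem_span_singleton,
    PowerSeries.X_dvd_iff, constantCoeff_lineEval]
  exact (congrArg (algebraMap k K) hp).trans (map_zero _)

variable {S}

/-- The leading form of `s` does not vanish along a generic line. -/
theorem exists_tOrd_lineHom_eq_adicOrder [Infinite k] [Nontrivial K] {s : S} (hs : s ≠ 0) :
    ∃ c : Fin d → k, (∀ j, c j ≠ 0) ∧ lineHom K S c s ≠ 0 ∧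
      tOrd (lineHom K S c s) = adicOrder (mS k d S) s := by
  obtain ⟨⟨p, y⟩, hps⟩ := IsLocalization.surj (mPoly k d).primeCompl s
  obtain ⟨e, he, hpe⟩ := exists_homogeneousComponent_ne_zero hs hps
  obtain ⟨c, hc, hc0⟩ := exists_eval_ne_zero_forall_ne_zero hpe
  have hndvd : ¬ PowerSeries.X ^ (e + 1) ∣ lineHom K S c s := fun hdvd => by
    have hp : PowerSeries.X ^ (e + 1) ∣ lineEval K c p := by
      rw [← lineHom_algebraMap K S, ← hps, map_mul]
      exact hdvd.mul_right _
    have hcoeff := PowerSeries.X_pow_dvd_iff.1 hp e e.lt_succ_self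
    rw [coeff_lineEval, map_eq_zero] at hcoeff
    exact hc hcoeff
  have hne : lineHom K S c s ≠ 0 := fun h => hndvd (h ▸ dvd_zero _)
  refine ⟨c, hc0, hne, le_antisymm ?_ ?_⟩
  · rw [← mem_tId_pow_iff, mem_pow_iff_le_adicOrder hne, ← tOrd] at hndvd
    omega
  · rw [tOrd, ← mem_pow_iff_le_adicOrder hne]
    exact Ideal.le_comap_pow _ _ (Ideal.pow_right_mono (mS_le_comap_lineHom K S c) _
      ((mem_pow_iff_le_adicOrder hs).2 le_rfl))

end Lines

section Hypersurface

open scoped NNReal PowerSeries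

variable {S : Type*} [CommRing S] (b : ℕ) (Bc : ℕ → S)

lemma monic_minPolyOf : (minPolyOf b Bc).Monic :=
  monic_X_pow_add (degree_sum_range_C_mul_X_pow_lt Bc (Nat.sub_le b 1))

lemma natDegree_minPolyOf [Nontrivial S] : (minPolyOf b Bc).natDegree = b := by
  rw [minPolyOf, natDegree_add_eq_left_of_degree_lt, natDegree_X_pow]
  rw [degree_X_pow]
  exact degree_sum_range_C_mul_X_pow_lt Bc (Nat.sub_le b 1)

variable {b}

lemma coeff_minPolyOf {j : ℕ} (hj : j < b) :
    (minPolyOf b Bc).coeff j = if j < b - 1 then Bc j else 0 := by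
  simp [minPolyOf, coeff_X_pow, hj.ne]

variable {Bc}

lemma exists_ne_zero_root_minPolyOf {K : Type*} [Field K] [IsAlgClosed K] [CharZero K]
    (ψ : S →+* K⟦X⟧) {i : ℕ} (hb : 2 ≤ b) (hi : i ≤ b - 2) (hψ : ψ (Bc i) ≠ 0) :
    ∃ (n : ℕ) (hn : n ≠ 0) (r : K⟦X⟧), r ≠ 0 ∧
      (minPolyOf b Bc).eval₂ ((PowerSeries.expand n hn).toRingHom.comp ψ) r = 0 := by
  have : Nontrivial S := ψ.domain_nontrivial
  have hdeg : ((minPolyOf b Bc).map ψ).natDegree = b := by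
    rw [(monic_minPolyOf b Bc).natDegree_map, natDegree_minPolyOf]
  obtain ⟨n, hn, r, hr0, hr⟩ :=
    exists_ne_zero_eval₂_expand_eq_zero ((monic_minPolyOf b Bc).map ψ) <|
      (natTrailingDegree_le_of_ne_zero (n := i) <| by
        rwa [coeff_map, coeff_minPolyOf Bc (by omega), if_pos (by omega)]).trans_lt (by omega)
  exact ⟨n, hn, r, hr0, by rwa [eval₂_map] at hr⟩

end Hypersurface

section ContactAlgebra

open scoped NNReal PowerSeries

lemma map_mem_pow_ceil {R A : Type*} [CommRing R] [CommRing A] {I : Ideal R} {J : Ideal A} {n : ℕ}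
    {ψ : R →+* A} (hψ : I ≤ (J ^ n).comap ψ) {x : ℝ≥0} {f : R} (hf : f ∈ I ^ ⌈x⌉₊) :
    ψ f ∈ J ^ ⌈n * x⌉₊ := by
  have hmem : ψ f ∈ (J ^ n) ^ ⌈x⌉₊ := Ideal.le_comap_pow _ _ (Ideal.pow_right_mono hψ _ hf)
  rw [← pow_mul] at hmem
  refine Ideal.pow_le_pow_right (Nat.ceil_le.2 ?_) hmem
  push_cast
  gcongr
  exact Nat.le_ceil x

variable {k : Type} [Field k] {d : ℕ} {S : Type} [CommRing S] [Algebra (MvPolynomial (Fin d) k) S]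
  [Algebra k S] {K : Type} [Field K] [Algebra k K] {φ : S[X] →ₐ[k] K⟦X⟧}
  {b n : ℕ} {Bc : ℕ → S} {q : ℝ≥0}

lemma le_tOrd_X_of_minPolyOf_eq_zero
    (hφ : mS k d S ≤ (tId K ^ n).comap ((φ : S[X] →+* K⟦X⟧).comp C))
    (hBc : ∀ j ≤ b - 2, Bc j ∈ mS k d S ^ ⌈q * (b - j : ℕ)⌉₊)
    (hroot : φ (minPolyOf b Bc) = 0) (hX : φ X ≠ 0) : n * q ≤ tOrd (φ X) := by
  have : Nontrivial S := ((φ : S[X] →+* K⟦X⟧).comp C).domain_nontrivial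
  have hdeg : ((minPolyOf b Bc).map ((φ : S[X] →+* K⟦X⟧).comp C)).natDegree = b := by
    rw [(monic_minPolyOf b Bc).natDegree_map, natDegree_minPolyOf]
  refine le_tOrd_of_eval_eq_zero ((monic_minPolyOf b Bc).map ((φ : S[X] →+* K⟦X⟧).comp C))
    (fun j hj => ?_) hX ?_
  · rw [hdeg] at hj ⊢
    rw [coeff_map, coeff_minPolyOf Bc hj, mul_assoc]
    split_ifs with hj'
    · exact map_mem_pow_ceil hφ (hBc j (by omega))
    · rw [map_zero]
      exact zero_mem _
  · rw [eval_map, ← hroot]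
    conv_rhs => rw [← eval₂_C_X (p := minPolyOf b Bc)]
    exact (hom_eval₂ _ C (φ : S[X] →+* K⟦X⟧) X).symm

variable {D : Fin d → Derivation k S S}

lemma hypContact_le_slopeSubalgebra
    (hφ : mS k d S ≤ (tId K ^ n).comap ((φ : S[X] →+* K⟦X⟧).comp C))
    (helim : hypElim k d S D b Bc ≤ slopeSubalgebra (mS k d S) q) (hX : n * q ≤ tOrd (φ X)) :
    hypContact k d S D b Bc φ ≤ slopeSubalgebra (tId K) (n * q) := by
  refine Algebra.adjoin_le ?_
  rintro _ (rfl | ⟨g, l, hg, -, rfl⟩)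
  · rw [← pow_one (X : K⟦X⟧[X])]
    refine C_mul_X_pow_mem_slopeSubalgebra.2 (mem_tId_pow_iff.2 (pow_dvd_pow _ ?_))
    simpa using hX
  · refine C_mul_X_pow_mem_slopeSubalgebra.2 ?_
    rw [mul_assoc]
    exact map_mem_pow_ceil hφ (C_mul_X_pow_mem_slopeSubalgebra.1 (helim hg))

lemma reesOrder_hypContact (hφ : mS k d S ≤ (tId K ^ n).comap ((φ : S[X] →+* K⟦X⟧).comp C))
    (helim : hypElim k d S D b Bc ≤ slopeSubalgebra (mS k d S) q) (hX : n * q ≤ tOrd (φ X))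
    {i : ℕ} (hi : i ≤ b - 2) (hib : i < b) (hne : φ (C (Bc i)) ≠ 0)
    (hord : (tOrd (φ (C (Bc i))) : ℝ≥0) = n * q * (b - i : ℕ)) :
    reesOrder (tId K) (hypContact k d S D b Bc φ) = (n * q : ℝ≥0) :=
  reesOrder_eq (hypContact_le_slopeSubalgebra hφ helim hX) hne (Nat.sub_ne_zero_of_lt hib)
    (Algebra.subset_adjoin (Or.inr ⟨Bc i, b - i, C_mul_X_pow_mem_hypElim hi, hne, rfl⟩)) hord

end ContactAlgebra

section RamifiedLines

open scoped PowerSeries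

variable {k : Type} [Field k] {d : ℕ} (S : Type) [CommRing S] [Algebra (MvPolynomial (Fin d) k) S]
  [Algebra k S] [IsScalarTower k (MvPolynomial (Fin d) k) S] [IsSLoc k d S]
  {K : Type} [Field K] [Algebra k K] (c : Fin d → k) {n : ℕ} (hn : n ≠ 0) (r : K⟦X⟧)

/-- The homomorphism `S[x] → K⟦t⟧` with `z_j ↦ c_j t ^ n` and `x ↦ r`. -/
def ramifiedLine : S[X] →ₐ[k] K⟦X⟧ :=
  eval₂AlgHom (((PowerSeries.expand n hn).restrictScalars k).comp (lineHom K S c)) r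
    fun _ => .all _ _

variable {S}

lemma ramifiedLine_X : ramifiedLine S c hn r X = r := eval₂_X _ _

lemma ramifiedLine_C (s : S) :
    ramifiedLine S c hn r (C s) = PowerSeries.expand n hn (lineHom K S c s) := eval₂_C _ _

variable {c hn r} in
lemma ramifiedLine_C_ne_zero {s : S} (hs : lineHom K S c s ≠ 0) :
    ramifiedLine S c hn r (C s) ≠ 0 := by
  rw [ramifiedLine_C]
  exact (map_ne_zero_iff _ (expand_injective hn)).2 hs

lemma ramifiedLine_C_zvar (j : Fin d) : ramifiedLine S c hn r (C (zvar k d S j)) =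
    PowerSeries.C (algebraMap k K (c j)) * PowerSeries.X ^ n := by
  rw [ramifiedLine_C, lineHom_zvar, map_mul, PowerSeries.expand_C, PowerSeries.expand_X]

lemma mS_le_comap_ramifiedLine :
    mS k d S ≤ (tId K ^ n).comap ((ramifiedLine S c hn r : S[X] →+* K⟦X⟧).comp C) := fun s hs => by
  have := expand_mem_tId_pow hn (mS_le_comap_lineHom K S c hs)
  rwa [← ramifiedLine_C c hn r] at this

lemma tOrd_ramifiedLine_C (s : S) :
    tOrd (ramifiedLine S c hn r (C s)) = n * tOrd (lineHom K S c s) := by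
  rw [ramifiedLine_C, tOrd_expand]

lemma tOrd_ramifiedLine_C_zvar {c : Fin d → k} {j : Fin d} (hc : c j ≠ 0) :
    tOrd (ramifiedLine S c hn r (C (zvar k d S j))) = n := by
  rw [ramifiedLine_C_zvar, tOrd_eq_toNat_order, PowerSeries.order_mul, PowerSeries.order_X_pow,
    PowerSeries.order_zero_of_unit, zero_add, ENat.toNat_natCast]
  exact (isUnit_iff_ne_zero.2 hc).map (PowerSeries.C.comp (algebraMap k K))

variable {c}

lemma isHypArc_ramifiedLine {b : ℕ} {Bc : ℕ → S} (hc : ∀ j, c j ≠ 0) (hr : r ≠ 0)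
    (hnr : n ≤ tOrd r) (hroot : ramifiedLine S c hn r (minPolyOf b Bc) = 0) :
    IsHypArc k d S b Bc (ramifiedLine S c hn r) := by
  have hn1 : 1 ≤ n := Nat.one_le_iff_ne_zero.2 hn
  refine ⟨hroot, ?_, fun j => mem_tId_of_one_le_tOrd ?_, ?_, fun j => ?_⟩
  · rw [ramifiedLine_X]
    exact mem_tId_of_one_le_tOrd (hn1.trans hnr)
  · rwa [tOrd_ramifiedLine_C_zvar hn r (hc j)]
  · rwa [ramifiedLine_X]
  · rw [ramifiedLine_C_zvar]
    have hcK : algebraMap k K (c j) ≠ 0 := (_root_.map_ne_zero _).2 (hc j)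
    exact mul_ne_zero ((map_ne_zero_iff _ PowerSeries.C_injective).2 hcK)
      (pow_ne_zero n PowerSeries.X_ne_zero)

lemma hypArcOrd_ramifiedLine [Nonempty (Fin d)] (hc : ∀ j, c j ≠ 0) (hnr : n ≤ tOrd r) :
    hypArcOrd k d S (ramifiedLine S c hn r) = n := by
  simp only [hypArcOrd, ramifiedLine_X, tOrd_ramifiedLine_C_zvar hn r (hc _), Set.range_const]
  rw [csInf_pair]
  exact inf_of_le_right hnr

end RamifiedLines

theorem hypersurface_exists_arc_normalized_contact_order_eq_elimination_order_general
    (k : Type) [Field k] [CharZero k] (d : ℕ) (hd : 1 ≤ d)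
    (S : Type) [CommRing S] [Algebra (MvPolynomial (Fin d) k) S]
    [Algebra k S] [IsScalarTower k (MvPolynomial (Fin d) k) S] [IsSLoc k d S]
    (D : Fin d → Derivation k S S)
    (_hD : ∀ i j : Fin d, D j (zvar k d S i) = if i = j then 1 else 0)
    (b : ℕ) (hb : 2 ≤ b) (Bc : ℕ → S)
    (hmem : ∀ i ≤ b - 2, Bc i ∈ (mS k d S) ^ (b - i))
    (hnz : ∃ i ≤ b - 2, Bc i ≠ 0) (K : Type) [Field K] [IsAlgClosed K] [Algebra k K] :
    ∃ φ : S[X] →ₐ[k] PowerSeries K, IsHypArc k d S b Bc φ ∧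
      reesOrder (tId K) (hypContact k d S D b Bc φ) / (hypArcOrd k d S φ : ℝ≥0∞) =
        reesOrder (mS k d S) (hypElim k d S D b Bc) := by
  have : CharZero K := charZero_of_injective_algebraMap (algebraMap k K).injective
  have : Nonempty (Fin d) := ⟨⟨0, hd⟩⟩
  obtain ⟨q, hq, ⟨i, hi, hi0, hiq⟩, hBc⟩ := exists_slope (show b - 2 < b by omega) hmem hnz
  have helim : hypElim k d S D b Bc ≤ slopeSubalgebra (mS k d S) q :=
    hypElim_le_slopeSubalgebra hq hBc
  obtain ⟨c, hc, hci0, hci⟩ := exists_tOrd_lineHom_eq_adicOrder (k := k) (d := d) K hi0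
  obtain ⟨n, hn, r, hr0, hr⟩ :=
    exists_ne_zero_root_minPolyOf (Bc := Bc) (lineHom K S c : S →+* PowerSeries K) hb hi hci0
  let φ := ramifiedLine S c hn r
  have hφ := mS_le_comap_ramifiedLine (S := S) c hn r
  have hX : φ X = r := ramifiedLine_X c hn r
  have hnr : n * q ≤ tOrd (φ X) := le_tOrd_X_of_minPolyOf_eq_zero hφ hBc hr (hX ▸ hr0)
  have hnr' : n ≤ tOrd r := by
    rw [hX] at hnr
    exact_mod_cast (le_mul_of_one_le_right (Nat.cast_nonneg n) hq).trans hnr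
  refine ⟨φ, isHypArc_ramifiedLine hn r hc hr0 hnr' hr, ?_⟩
  rw [hypArcOrd_ramifiedLine hn r hc hnr',
    reesOrder_eq helim hi0 (by omega) (C_mul_X_pow_mem_hypElim hi) hiq,
    reesOrder_hypContact hφ helim hnr hi (by omega) (ramifiedLine_C_ne_zero hci0) <| by
      rw [tOrd_ramifiedLine_C, hci, Nat.cast_mul, hiq, mul_assoc], ENNReal.coe_mul,
    ENNReal.coe_natCast, mul_comm]
  exact ENNReal.mul_div_cancel_right (mod_cast hn) (ENNReal.natCast_ne_top n)

/-- (Theorem `thm:igualdad`, hypersurface case.)  In the hypersurface setting there exist a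
field extension `K ⊇ k` and an arc `φ : S[x] → K⟦t⟧` in `X = V(f)` through the closed
point `ξ` such that `r_{X,φ} / ord(φ) = ord(G_X^{(d)})`. -/
theorem hypersurface_exists_arc_normalized_contact_order_eq_elimination_order
    (k : Type) [Field k] [CharZero k] (d : ℕ) (hd : 1 ≤ d)
    (S : Type) [CommRing S] [IsDomain S] [Algebra (MvPolynomial (Fin d) k) S]
    [Algebra k S] [IsScalarTower k (MvPolynomial (Fin d) k) S] [IsSLoc k d S]
    (D : Fin d → Derivation k S S)
    (hD : ∀ i j : Fin d, D j (zvar k d S i) = if i = j then 1 else 0)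
    (b : ℕ) (hb : 2 ≤ b) (Bc : ℕ → S)
    (hmem : ∀ i ≤ b - 2, Bc i ∈ (mS k d S) ^ (b - i))
    (hnz : ∃ i ≤ b - 2, Bc i ≠ 0)
    (hirr : Irreducible (minPolyOf b Bc)) :
    ∃ (K : Type) (_ : Field K) (_ : Algebra k K)
      (φ : Polynomial S →ₐ[k] PowerSeries K), IsHypArc k d S b Bc φ ∧
      reesOrder (tId K) (hypContact k d S D b Bc φ) / (hypArcOrd k d S φ : ℝ≥0∞) =
        reesOrder (mS k d S) (hypElim k d S D b Bc) := by
  obtain ⟨φ, hφ⟩ := hypersurface_exists_arc_normalized_contact_order_eq_elimination_order_general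
    k d hd S D hD b hb Bc hmem hnz (AlgebraicClosure k)
  exact ⟨AlgebraicClosure k, inferInstance, inferInstance, φ, hφ⟩

end NashMult
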